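/- Let 1 ≤ p < ∞ and let u_1, u_2, u_3, u_4 : M_N → M_N be completely positive linear maps with ‖u_j(x)‖_{S_p} ≤ C_j ‖x‖_{S_p} for all x ∈ M_N (j = 1, 2, 3, 4). Then the map u = u_1 − u_2 + i(u_3 − u_4) has regular norm ‖u‖_r ≤ C_1 + C_2 + C_3 + C_4; in particular every linear combination of bounded completely positive maps on M_N is regular. (The implication (iii) ⟹ (i) of Theorem 0.1, in the matrix-algebra case, with quantitative bound.) -/

import Mathlib

open scoped Kronecker ENNReal Classical ComplexOrder
open Matrix

noncomputable section

/-- The operator norm (`S_∞` norm) of a complex matrix, acting on Euclidean space. -/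
def opNorm {ι : Type} [Fintype ι] [DecidableEq ι] (a : Matrix ι ι ℂ) : ℝ :=
  ‖LinearMap.toContinuousLinearMap (Matrix.toEuclideanLin a)‖

/-- The Schatten `p`-norm of a complex matrix: the `ℓ^p` norm of its singular values
(the square roots of the eigenvalues of `aᴴ * a`); for `p = ∞` it is the operator norm. -/
def schattenNorm {ι : Type} [Fintype ι] [DecidableEq ι] (p : ℝ≥0∞) (a : Matrix ι ι ℂ) : ℝ :=
  if p = ∞ then opNorm a
  else (∑ i, Real.sqrt ((Matrix.posSemidef_conjTranspose_mul_self a).isHermitian.eigenvalues i) ^ p.toReal)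
      ^ (1 / p.toReal)

/-- Pisier's vector-valued Schatten norm `‖x‖_{S_p^N[M_n]}` on `M_N ⊗ M_n`:
the infimum of `‖a‖_{S_{2p}} ‖y‖_{S_∞} ‖b‖_{S_{2p}}` over factorizations
`x = (a ⊗ 1) · y · (b ⊗ 1)`. -/
def pisierNorm (p : ℝ≥0∞) {N n : ℕ} (x : Matrix (Fin N × Fin n) (Fin N × Fin n) ℂ) : ℝ :=
  sInf { r | ∃ (a b : Matrix (Fin N) (Fin N) ℂ)
      (y : Matrix (Fin N × Fin n) (Fin N × Fin n) ℂ),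
      x = (a ⊗ₖ (1 : Matrix (Fin n) (Fin n) ℂ)) * y * (b ⊗ₖ (1 : Matrix (Fin n) (Fin n) ℂ)) ∧
      r = schattenNorm (2 * p) a * opNorm y * schattenNorm (2 * p) b }

/-- The amplification `u ⊗ id_{M_n} : M_N ⊗ M_n → M_m ⊗ M_n` of a map `u : M_N → M_m`,
acting as `u` on each `M_n`-block entry. -/
def amp {N m n : ℕ} (u : Matrix (Fin N) (Fin N) ℂ → Matrix (Fin m) (Fin m) ℂ)
    (x : Matrix (Fin N × Fin n) (Fin N × Fin n) ℂ) : Matrix (Fin m × Fin n) (Fin m × Fin n) ℂ :=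
  Matrix.of fun ik jl => u (Matrix.of fun i j => x (i, ik.2) (j, jl.2)) ik.1 jl.1

/-- The amplification `id_{M_n} ⊗ u : M_n ⊗ M_N → M_n ⊗ M_m` of a map `u : M_N → M_m`. -/
def ampLeft {n N m : ℕ} (u : Matrix (Fin N) (Fin N) ℂ → Matrix (Fin m) (Fin m) ℂ)
    (x : Matrix (Fin n × Fin N) (Fin n × Fin N) ℂ) : Matrix (Fin n × Fin m) (Fin n × Fin m) ℂ :=
  Matrix.of fun ki lj => u (Matrix.of fun i j => x (ki.1, i) (lj.1, j)) ki.2 lj.2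

/-- The trace pairing `T : M_k ⊗ M_k → ℂ`, with `T(a ⊗ b) = tr(ᵗa·b)`; writing
`z` as a `k×k` matrix of blocks `z_{ij} ∈ M_k`, `T(z) = Σ_{i,j} (z_{ij})_{ij}`. -/
def tracePair {k : ℕ} (z : Matrix (Fin k × Fin k) (Fin k × Fin k) ℂ) : ℂ :=
  ∑ i : Fin k, ∑ j : Fin k, z (i, i) (j, j)

/-- A map `u : M_N → M_m` is completely positive if all its amplifications
`id_{M_n} ⊗ u` preserve positive semidefiniteness. -/
def CompletelyPositive {N m : ℕ}
    (u : Matrix (Fin N) (Fin N) ℂ → Matrix (Fin m) (Fin m) ℂ) : Prop :=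
  ∀ (n : ℕ) (x : Matrix (Fin n × Fin N) (Fin n × Fin N) ℂ),
    x.PosSemidef → (ampLeft u x).PosSemidef

/-- The regular norm (relative to `p`) of `u : M_N → M_m`: the supremum in `[0,∞]`
over `n ≥ 1` of the norms of the amplifications `u ⊗ id_{M_n}` from
`(M_N ⊗ M_n, ‖·‖_{S_p^N[M_n]})` to `(M_m ⊗ M_n, ‖·‖_{S_p^m[M_n]})`. -/
def regNorm (p : ℝ≥0∞) {N m : ℕ}
    (u : Matrix (Fin N) (Fin N) ℂ → Matrix (Fin m) (Fin m) ℂ) : ℝ≥0∞ :=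
  ⨆ (n : ℕ) (x : Matrix (Fin N × Fin (n + 1)) (Fin N × Fin (n + 1)) ℂ)
    (_ : pisierNorm p x ≤ 1), ENNReal.ofReal (pisierNorm p (amp u x))

/-- Pisier's norm `ρ_p` on `M_n ⊗ M_m` (with `q` the conjugate exponent `p'`):
the infimum of `‖γ‖_{S_{2p}} ‖α‖_{S_{2p'}} ‖g‖_{S_∞} ‖δ‖_{S_{2p}} ‖β‖_{S_{2p'}}`
over factorizations `a = (γ ⊗ α) · g · (δ ⊗ β)`. -/
def rho (p q : ℝ≥0∞) {n m : ℕ} (a : Matrix (Fin n × Fin m) (Fin n × Fin m) ℂ) : ℝ :=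
  sInf { r | ∃ (γ δ : Matrix (Fin n) (Fin n) ℂ) (α β : Matrix (Fin m) (Fin m) ℂ)
      (g : Matrix (Fin n × Fin m) (Fin n × Fin m) ℂ),
      a = (γ ⊗ₖ α) * g * (δ ⊗ₖ β) ∧
      r = schattenNorm (2 * p) γ * schattenNorm (2 * q) α * opNorm g *
          schattenNorm (2 * p) δ * schattenNorm (2 * q) β }

/-- The amplification `u ⊗ id_{M_n}` of a map `u` defined only on a subspace `S ⊆ M_N`,
applied to an element of `M_N ⊗ M_n` all of whose `M_N`-valued block entries lie in `S`. -/
def ampOn {N m n : ℕ} (S : Submodule ℂ (Matrix (Fin N) (Fin N) ℂ))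
    (u : S →ₗ[ℂ] Matrix (Fin m) (Fin m) ℂ)
    (x : Matrix (Fin N × Fin n) (Fin N × Fin n) ℂ)
    (h : ∀ k l : Fin n, (Matrix.of fun i j => x (i, k) (j, l)) ∈ S) :
    Matrix (Fin m × Fin n) (Fin m × Fin n) ℂ :=
  Matrix.of fun ik jl => u ⟨Matrix.of fun i j => x (i, ik.2) (j, jl.2), h ik.2 jl.2⟩ ik.1 jl.1

end

/-!
A factorization `x = (a ⊗ 1) y (b ⊗ 1)` amounts to the positivity of a `2 × 2` block matrix: the one
with corner `x` and diagonal blocks `‖y‖ a aᴴ ⊗ 1`, `‖y‖ bᴴ b ⊗ 1` is positive, and conversely a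
positive block matrix with corner `x` and diagonal blocks `A ⊗ 1`, `B ⊗ 1` bounds the Pisier norm of
`x` by `√(‖A‖ₚ ‖B‖ₚ)`; singular `A` and `B` are perturbed by `ε • 1`.

A completely positive map preserves such block matrices, and multiplying the corner by a scalar `c`
preserves positivity if the diagonal is multiplied by `|c|`. Adding up, `∑ cᵢ uᵢ` acts on the corner
while `∑ |cᵢ| uᵢ` acts on the diagonal, and Minkowski's inequality for positive matrices bounds the
latter by `∑ |cᵢ| Cᵢ`. Minkowski's inequality in turn follows from the scalar one in an eigenbasis
of `A + B`, because compressing `A` to the diagonal of any orthonormal basis does not increase its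
Schatten norm (Peierls' inequality: the diagonal entries are averages of the eigenvalues).
-/

section SchattenNorm

open Unitary
open scoped Matrix.Norms.L2Operator MatrixOrder

variable {ι : Type} [Fintype ι] [DecidableEq ι] {p : ℝ≥0∞}

lemma opNorm_eq_l2_opNorm (a : Matrix ι ι ℂ) : opNorm a = ‖a‖ := rfl

lemma opNorm_nonneg (a : Matrix ι ι ℂ) : 0 ≤ opNorm a := norm_nonneg _

lemma schattenNorm_top (a : Matrix ι ι ℂ) : schattenNorm ∞ a = ‖a‖ := if_pos rfl

lemma schattenNorm_nonneg (p : ℝ≥0∞) (a : Matrix ι ι ℂ) : 0 ≤ schattenNorm p a := by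
  unfold schattenNorm
  split_ifs
  · exact opNorm_nonneg a
  · positivity

lemma sum_comp_eigenvalues_of_unitary_diagonalization {A : Matrix ι ι ℂ} (hA : A.IsHermitian)
    {U : unitaryGroup ι ℂ} {d : ι → ℝ}
    (hAU : A = conjStarAlgAut ℂ _ U (diagonal (Complex.ofReal ∘ d))) (f : ℝ → ℝ) :
    ∑ i, f (hA.eigenvalues i) = ∑ i, f (d i) := by
  have charpoly_eq : A.charpoly = ∏ i, (Polynomial.X - Polynomial.C (d i : ℂ)) := by
    rw [hAU, conjStarAlgAut_apply, charpoly_mul_comm, ← mul_assoc, Unitary.coe_star_mul_self,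
      one_mul, charpoly_diagonal]
    rfl
  have roots_eq : Multiset.map (RCLike.ofReal ∘ hA.eigenvalues) Finset.univ.val =
      Multiset.map (fun i => (d i : ℂ)) Finset.univ.val := by
    rw [← hA.roots_charpoly_eq_eigenvalues, charpoly_eq, Polynomial.roots_prod]
    · simp
    · simp [Finset.prod_ne_zero_iff, Polynomial.X_sub_C_ne_zero]
  simpa using congrArg (fun s : Multiset ℂ => (s.map fun z => f z.re).sum) roots_eq

lemma schattenNorm_of_posSemidef (hp : p ≠ ∞) {A : Matrix ι ι ℂ} (hA : A.PosSemidef) :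
    schattenNorm p A = (∑ i, hA.1.eigenvalues i ^ p.toReal) ^ (1 / p.toReal) := by
  have conj_mul_self : Aᴴ * A = conjStarAlgAut ℂ _ hA.1.eigenvectorUnitary
      (diagonal (Complex.ofReal ∘ fun i => hA.1.eigenvalues i ^ 2)) := by
    rw [hA.1.eq]
    conv_lhs => rw [hA.1.spectral_theorem]
    rw [← map_mul, diagonal_mul_diagonal]
    congr 2
    ext i
    simp [sq]
  rw [schattenNorm, if_neg hp, sum_comp_eigenvalues_of_unitary_diagonalization _ conj_mul_self
    fun x => √x ^ p.toReal]
  simp only [Real.sqrt_sq (hA.eigenvalues_nonneg _)]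

lemma schattenNorm_smul (hp : p ≠ 0) (c : ℂ) (a : Matrix ι ι ℂ) :
    schattenNorm p (c • a) = ‖c‖ * schattenNorm p a := by
  obtain rfl | hp_top := eq_or_ne p ∞
  · simp only [schattenNorm_top, norm_smul]
  have ha := isHermitian_conjTranspose_mul_self a
  have smul_diagonalization : (c • a)ᴴ * (c • a) = conjStarAlgAut ℂ _ ha.eigenvectorUnitary
      (diagonal (Complex.ofReal ∘ fun i => ‖c‖ ^ 2 * ha.eigenvalues i)) := by
    calc (c • a)ᴴ * (c • a) = ((‖c‖ : ℂ) ^ 2) • (aᴴ * a) := by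
          rw [conjTranspose_smul, smul_mul_smul_comm, Complex.star_def, Complex.conj_mul']
      _ = _ := by
          conv_lhs => rw [ha.spectral_theorem]
          rw [← map_smul, ← diagonal_smul]
          congr 2
          ext i
          simp
  rw [schattenNorm, schattenNorm, if_neg hp_top, if_neg hp_top,
    sum_comp_eigenvalues_of_unitary_diagonalization _ smul_diagonalization fun x => √x ^ p.toReal]
  simp_rw [Real.sqrt_mul (sq_nonneg ‖c‖), Real.sqrt_sq (norm_nonneg c),
    Real.mul_rpow (norm_nonneg c) (Real.sqrt_nonneg _), ← Finset.mul_sum]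
  rw [Real.mul_rpow (by positivity) (by positivity), ← Real.rpow_mul (norm_nonneg c),
    mul_one_div_cancel (ENNReal.toReal_ne_zero.mpr ⟨hp, hp_top⟩), Real.rpow_one]

lemma schattenNorm_smul_of_nonneg (hp : p ≠ 0) {t : ℝ} (ht : 0 ≤ t) (a : Matrix ι ι ℂ) :
    schattenNorm p (t • a) = t * schattenNorm p a := by
  rw [← Complex.coe_smul, schattenNorm_smul hp, Complex.norm_of_nonneg ht]

lemma schattenNorm_conjTranspose (p : ℝ≥0∞) (a : Matrix ι ι ℂ) :
    schattenNorm p aᴴ = schattenNorm p a := by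
  have eigenvalues_eq : (posSemidef_conjTranspose_mul_self aᴴ).1.eigenvalues =
      (posSemidef_conjTranspose_mul_self a).1.eigenvalues := by
    rw [IsHermitian.eigenvalues_eq_eigenvalues_iff, conjTranspose_conjTranspose,
      charpoly_mul_comm]
  rw [schattenNorm, schattenNorm, eigenvalues_eq, opNorm_eq_l2_opNorm, opNorm_eq_l2_opNorm,
    l2_opNorm_conjTranspose]

lemma schattenNorm_conjTranspose_mul_self (p : ℝ≥0∞) (a : Matrix ι ι ℂ) :
    schattenNorm p (aᴴ * a) = schattenNorm (2 * p) a ^ 2 := by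
  obtain rfl | hp := eq_or_ne p ∞
  · rw [ENNReal.mul_top two_ne_zero, schattenNorm_top, schattenNorm_top,
      l2_opNorm_conjTranspose_mul_self, sq]
  have ha := posSemidef_conjTranspose_mul_self a
  have sqrt_rpow (i : ι) :
      √(ha.1.eigenvalues i) ^ (2 * p.toReal) = ha.1.eigenvalues i ^ p.toReal := by
    rw [Real.rpow_mul (Real.sqrt_nonneg _), Real.rpow_two, Real.sq_sqrt (ha.eigenvalues_nonneg i)]
  rw [schattenNorm_of_posSemidef hp ha, schattenNorm,
    if_neg (ENNReal.mul_ne_top ENNReal.ofNat_ne_top hp), ENNReal.toReal_mul, ENNReal.toReal_ofNat]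
  simp_rw [sqrt_rpow]
  rw [← Real.rpow_mul_natCast
    (Finset.sum_nonneg fun i _ => Real.rpow_nonneg (ha.eigenvalues_nonneg i) _)]
  congr 1
  push_cast
  field_simp

lemma schattenNorm_mul_conjTranspose_self (p : ℝ≥0∞) (a : Matrix ι ι ℂ) :
    schattenNorm p (a * aᴴ) = schattenNorm (2 * p) a ^ 2 := by
  simpa only [conjTranspose_conjTranspose, schattenNorm_conjTranspose]
    using schattenNorm_conjTranspose_mul_self p aᴴ

lemma sum_norm_sq_row_of_unitary (U : unitaryGroup ι ℂ) (i : ι) :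
    ∑ k, ‖(U : Matrix ι ι ℂ) i k‖ ^ 2 = 1 := by
  have h : ((U : Matrix ι ι ℂ) * (U : Matrix ι ι ℂ)ᴴ) i i = 1 := by
    rw [← star_eq_conjTranspose, Unitary.mul_star_self_of_mem U.2, one_apply_eq]
  simp only [mul_apply, conjTranspose_apply, Complex.star_def,
    Complex.mul_conj'] at h
  exact_mod_cast h

lemma sum_norm_sq_col_of_unitary (U : unitaryGroup ι ℂ) (k : ι) :
    ∑ i, ‖(U : Matrix ι ι ℂ) i k‖ ^ 2 = 1 := by
  simpa [star_eq_conjTranspose] using sum_norm_sq_row_of_unitary (star U) k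

lemma sum_comp_diag_conj_le_sum_comp_eigenvalues {A : Matrix ι ι ℂ} (hA : A.IsHermitian)
    (V : unitaryGroup ι ℂ) {f : ℝ → ℝ} {s : Set ℝ} (hf : ConvexOn ℝ s f)
    (hs : ∀ i, hA.eigenvalues i ∈ s) :
    ∑ i, f (conjStarAlgAut ℂ _ V A i i).re ≤ ∑ k, f (hA.eigenvalues k) := by
  set W : unitaryGroup ι ℂ := V * hA.eigenvectorUnitary
  have diag_eq (i : ι) : (conjStarAlgAut ℂ _ V A i i).re =
      ∑ k, ‖(W : Matrix ι ι ℂ) i k‖ ^ 2 • hA.eigenvalues k := by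
    conv_lhs => rw [hA.spectral_theorem]
    rw [← conjStarAlgAut_mul_apply, conjStarAlgAut_apply, star_eq_conjTranspose, mul_apply,
      Complex.re_sum]
    refine Finset.sum_congr rfl fun k _ => ?_
    rw [mul_diagonal, conjTranspose_apply, mul_right_comm, Complex.star_def, Complex.mul_conj',
      Function.comp_apply, smul_eq_mul, ← Complex.ofReal_pow, Complex.re_ofReal_mul]
    rfl
  calc ∑ i, f (conjStarAlgAut ℂ _ V A i i).re
      ≤ ∑ i, ∑ k, ‖(W : Matrix ι ι ℂ) i k‖ ^ 2 • f (hA.eigenvalues k) :=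
        Finset.sum_le_sum fun i _ => diag_eq i ▸ hf.map_sum_le (fun _ _ => sq_nonneg _)
          (sum_norm_sq_row_of_unitary W i) fun k _ => hs k
    _ = ∑ k, f (hA.eigenvalues k) := by
        rw [Finset.sum_comm]
        simp_rw [← Finset.sum_smul, sum_norm_sq_col_of_unitary, one_smul]

lemma re_diag_conj_nonneg {A : Matrix ι ι ℂ} (hA : A.PosSemidef) (V : unitaryGroup ι ℂ) (i : ι) :
    0 ≤ (conjStarAlgAut ℂ _ V A i i).re := by
  rw [conjStarAlgAut_apply, star_eq_conjTranspose]
  exact (Complex.nonneg_iff.mp (hA.mul_mul_conjTranspose_same (V : Matrix ι ι ℂ)).diag_nonneg).1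

lemma sum_diag_rpow_le_schattenNorm (hp : 1 ≤ p) (hp_top : p ≠ ∞) {A : Matrix ι ι ℂ}
    (hA : A.PosSemidef) (V : unitaryGroup ι ℂ) :
    (∑ i, (conjStarAlgAut ℂ _ V A i i).re ^ p.toReal) ^ (1 / p.toReal) ≤ schattenNorm p A := by
  have one_le_toReal : 1 ≤ p.toReal := by simpa using ENNReal.toReal_mono hp_top hp
  rw [schattenNorm_of_posSemidef hp_top hA]
  refine Real.rpow_le_rpow (Finset.sum_nonneg fun i _ => Real.rpow_nonneg ?_ _) ?_ (by positivity)
  · exact re_diag_conj_nonneg hA V i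
  · exact sum_comp_diag_conj_le_sum_comp_eigenvalues hA.1 V (convexOn_rpow one_le_toReal)
      hA.eigenvalues_nonneg

lemma schattenNorm_add_le_of_posSemidef (hp : 1 ≤ p) {A B : Matrix ι ι ℂ}
    (hA : A.PosSemidef) (hB : B.PosSemidef) :
    schattenNorm p (A + B) ≤ schattenNorm p A + schattenNorm p B := by
  obtain rfl | hp_top := eq_or_ne p ∞
  · simpa only [schattenNorm_top] using norm_add_le A B
  have one_le_toReal : 1 ≤ p.toReal := by simpa using ENNReal.toReal_mono hp_top hp
  have hAB := hA.add hB
  set V := star hAB.1.eigenvectorUnitary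
  have eigenvalues_eq (i : ι) : hAB.1.eigenvalues i =
      (conjStarAlgAut ℂ _ V A i i).re + (conjStarAlgAut ℂ _ V B i i).re := by
    rw [← Complex.add_re, ← Matrix.add_apply, ← map_add,
      hAB.1.conjStarAlgAut_star_eigenvectorUnitary, diagonal_apply_eq, Function.comp_apply]
    exact (Complex.ofReal_re _).symm
  calc schattenNorm p (A + B)
      = (∑ i, ((conjStarAlgAut ℂ _ V A i i).re + (conjStarAlgAut ℂ _ V B i i).re) ^ p.toReal) ^
          (1 / p.toReal) := by
        simp_rw [schattenNorm_of_posSemidef hp_top hAB, eigenvalues_eq]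
    _ ≤ (∑ i, (conjStarAlgAut ℂ _ V A i i).re ^ p.toReal) ^ (1 / p.toReal) +
          (∑ i, (conjStarAlgAut ℂ _ V B i i).re ^ p.toReal) ^ (1 / p.toReal) :=
        Real.Lp_add_le_of_nonneg _ one_le_toReal (fun i _ => re_diag_conj_nonneg hA V i)
          fun i _ => re_diag_conj_nonneg hB V i
    _ ≤ schattenNorm p A + schattenNorm p B :=
        add_le_add (sum_diag_rpow_le_schattenNorm hp hp_top hA V)
          (sum_diag_rpow_le_schattenNorm hp hp_top hB V)

lemma schattenNorm_sum_smul_le {κ : Type*} (hp : 1 ≤ p) (s : Finset κ) {t : κ → ℝ}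
    {A : κ → Matrix ι ι ℂ} (ht : ∀ k ∈ s, 0 ≤ t k) (hA : ∀ k ∈ s, (A k).PosSemidef) :
    schattenNorm p (∑ k ∈ s, t k • A k) ≤ ∑ k ∈ s, t k * schattenNorm p (A k) := by
  have schattenNorm_zero : schattenNorm p (0 : Matrix ι ι ℂ) = 0 := by
    simpa using schattenNorm_smul (zero_lt_one.trans_le hp).ne' 0 (0 : Matrix ι ι ℂ)
  calc schattenNorm p (∑ k ∈ s, t k • A k)
      ≤ ∑ k ∈ s, schattenNorm p (t k • A k) :=
        Finset.le_sum_of_subadditive_on_pred (schattenNorm p) PosSemidef schattenNorm_zero.le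
          (fun _ _ => schattenNorm_add_le_of_posSemidef hp) (fun _ _ => PosSemidef.add) _
          fun k hk => (hA k hk).smul (ht k hk)
    _ = ∑ k ∈ s, t k * schattenNorm p (A k) :=
        Finset.sum_congr rfl fun k hk =>
          schattenNorm_smul_of_nonneg (zero_lt_one.trans_le hp).ne' (ht k hk) (A k)

lemma schattenNorm_add_smul_one_le (hp : 1 ≤ p) {A : Matrix ι ι ℂ} (hA : A.PosSemidef) {ε : ℝ}
    (hε : 0 ≤ ε) :
    schattenNorm p (A + ε • (1 : Matrix ι ι ℂ)) ≤
      schattenNorm p A + ε * schattenNorm p (1 : Matrix ι ι ℂ) :=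
  (schattenNorm_add_le_of_posSemidef hp hA (PosSemidef.one.smul hε)).trans_eq
    (congrArg _ (schattenNorm_smul_of_nonneg (zero_lt_one.trans_le hp).ne' hε 1))

end SchattenNorm

section PositiveBlockMatrices

open scoped Matrix.Norms.L2Operator MatrixOrder

variable {ι κ ι' κ' : Type*}

lemma posSemidef_fromBlocks_smul_of_nonneg {P : Matrix ι ι ℂ} {X : Matrix ι κ ℂ}
    {Q : Matrix κ κ ℂ} (h : (fromBlocks P X Xᴴ Q).PosSemidef) {t : ℝ} (ht : 0 ≤ t) :
    (fromBlocks (t • P) (t • X) (t • X)ᴴ (t • Q)).PosSemidef := by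
  rw [conjTranspose_smul, star_trivial, ← fromBlocks_smul]
  exact h.smul ht

lemma posSemidef_fromBlocks_conj [Fintype ι] [Fintype κ] [Finite ι'] [Finite κ']
    {P : Matrix ι ι ℂ} {X : Matrix ι κ ℂ} {Q : Matrix κ κ ℂ}
    (h : (fromBlocks P X Xᴴ Q).PosSemidef) (S : Matrix ι ι' ℂ) (T : Matrix κ κ' ℂ) :
    (fromBlocks (Sᴴ * P * S) (Sᴴ * X * T) (Sᴴ * X * T)ᴴ (Tᴴ * Q * T)).PosSemidef := by
  simpa only [fromBlocks_conjTranspose, fromBlocks_multiply, conjTranspose_zero, Matrix.zero_mul,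
    Matrix.mul_zero, add_zero, zero_add, conjTranspose_mul, conjTranspose_conjTranspose,
    Matrix.mul_assoc] using h.conjTranspose_mul_mul_same (fromBlocks S 0 0 T)

lemma posSemidef_fromBlocks_smul [Finite ι] [Finite κ] {P : Matrix ι ι ℂ} {X : Matrix ι κ ℂ}
    {Q : Matrix κ κ ℂ} (h : (fromBlocks P X Xᴴ Q).PosSemidef) (c : ℂ) :
    (fromBlocks (‖c‖ • P) (c • X) (c • X)ᴴ (‖c‖ • Q)).PosSemidef := by
  have := Fintype.ofFinite ι
  have := Fintype.ofFinite κ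
  set z := Complex.exp (c.arg * Complex.I)
  have star_mul_self : star z * z = 1 := by
    rw [Complex.star_def, Complex.conj_mul', Complex.norm_exp_ofReal_mul_I, Complex.ofReal_one,
      one_pow]
  have rotated := posSemidef_fromBlocks_conj h (1 : Matrix ι ι ℂ) (z • (1 : Matrix κ κ ℂ))
  have phase_smul : ‖c‖ • z • X = c • X := by
    rw [← Complex.coe_smul, smul_smul, Complex.norm_mul_exp_arg_mul_I]
  simpa only [conjTranspose_one, conjTranspose_smul z, Matrix.one_mul, Matrix.mul_one,
    Matrix.smul_mul, Matrix.mul_smul, smul_smul, star_mul_self, mul_comm z, one_smul, phase_smul]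
    using posSemidef_fromBlocks_smul_of_nonneg rotated (norm_nonneg c)

variable [Fintype ι] [Fintype κ] [DecidableEq ι] [DecidableEq κ]

lemma posSemidef_fromBlocks_one_iff (y : Matrix ι κ ℂ) :
    (fromBlocks 1 y yᴴ 1).PosSemidef ↔ ‖y‖ ≤ 1 := by
  let _ := invertibleOne (α := Matrix ι ι ℂ)
  rw [PosDef.fromBlocks₁₁ y 1 PosDef.one, inv_one, Matrix.mul_one, ← Matrix.le_iff,
    ← CStarAlgebra.norm_le_one_iff_of_nonneg _ (posSemidef_conjTranspose_mul_self y).nonneg,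
    l2_opNorm_conjTranspose_mul_self, ← sq, sq_le_one_iff₀ (norm_nonneg y)]

lemma posSemidef_fromBlocks_norm_smul_one (y : Matrix ι κ ℂ) :
    (fromBlocks (‖y‖ • 1) y yᴴ (‖y‖ • 1)).PosSemidef := by
  have normalized := (posSemidef_fromBlocks_one_iff (‖y‖⁻¹ • y)).mpr <| by
    rw [norm_smul, norm_inv, norm_norm]
    exact inv_mul_le_one
  have smul_normalized : ‖y‖ • ‖y‖⁻¹ • y = y := by
    obtain rfl | hy := eq_or_ne y 0
    · simp
    · exact smul_inv_smul₀ (norm_ne_zero_iff.mpr hy) y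
  simpa only [smul_normalized] using
    posSemidef_fromBlocks_smul_of_nonneg normalized (norm_nonneg y)

lemma conjTranspose_inv_mul_conjTranspose_mul_self_mul_inv {S : Matrix ι ι ℂ}
    (hS : IsUnit S.det) : S⁻¹ᴴ * (Sᴴ * S) * S⁻¹ = 1 := by
  rw [← Matrix.mul_assoc, ← conjTranspose_mul, mul_nonsing_inv S hS, conjTranspose_one,
    Matrix.one_mul, mul_nonsing_inv S hS]

lemma exists_eq_mul_mul_of_posSemidef_fromBlocks {S : Matrix ι ι ℂ} {T : Matrix κ κ ℂ}
    {X : Matrix ι κ ℂ} (hS : IsUnit S) (hT : IsUnit T)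
    (h : (fromBlocks (Sᴴ * S) X Xᴴ (Tᴴ * T)).PosSemidef) :
    ∃ y : Matrix ι κ ℂ, ‖y‖ ≤ 1 ∧ X = Sᴴ * y * T := by
  rw [isUnit_iff_isUnit_det] at hS hT
  refine ⟨S⁻¹ᴴ * X * T⁻¹, ?_, ?_⟩
  · have conj_inv := posSemidef_fromBlocks_conj h S⁻¹ T⁻¹
    rwa [conjTranspose_inv_mul_conjTranspose_mul_self_mul_inv hS,
      conjTranspose_inv_mul_conjTranspose_mul_self_mul_inv hT,
      posSemidef_fromBlocks_one_iff] at conj_inv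
  · rw [Matrix.mul_assoc, Matrix.mul_assoc, Matrix.mul_assoc, nonsing_inv_mul T hT,
      Matrix.mul_one, ← Matrix.mul_assoc, ← conjTranspose_mul, nonsing_inv_mul S hS,
      conjTranspose_one, Matrix.one_mul]

end PositiveBlockMatrices

section PisierNorm

open scoped Matrix.Norms.L2Operator MatrixOrder Topology
open Filter

variable {N n : ℕ} {p : ℝ≥0∞}

lemma pisierNorm_le (p : ℝ≥0∞) (a b : Matrix (Fin N) (Fin N) ℂ)
    (y : Matrix (Fin N × Fin n) (Fin N × Fin n) ℂ) :
    pisierNorm p ((a ⊗ₖ (1 : Matrix (Fin n) (Fin n) ℂ)) * y * (b ⊗ₖ 1)) ≤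
      schattenNorm (2 * p) a * ‖y‖ * schattenNorm (2 * p) b := by
  refine csInf_le ⟨0, ?_⟩ ⟨a, b, y, rfl, rfl⟩
  rintro _ ⟨a, b, y, -, rfl⟩
  exact mul_nonneg (mul_nonneg (schattenNorm_nonneg _ _) (opNorm_nonneg y))
    (schattenNorm_nonneg _ _)

lemma pisierNorm_le_sqrt_of_posDef {A B : Matrix (Fin N) (Fin N) ℂ}
    {x : Matrix (Fin N × Fin n) (Fin N × Fin n) ℂ} (hA : A.PosDef) (hB : B.PosDef)
    (h : (fromBlocks (A ⊗ₖ (1 : Matrix (Fin n) (Fin n) ℂ)) x xᴴ (B ⊗ₖ 1)).PosSemidef) :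
    pisierNorm p x ≤ √(schattenNorm p A * schattenNorm p B) := by
  obtain ⟨S, hS, rfl⟩ := CStarAlgebra.isStrictlyPositive_iff_eq_star_mul_self.mp
    hA.isStrictlyPositive
  obtain ⟨T, hT, rfl⟩ := CStarAlgebra.isStrictlyPositive_iff_eq_star_mul_self.mp
    hB.isStrictlyPositive
  have isUnit_kronecker_one {R : Matrix (Fin N) (Fin N) ℂ} (hR : IsUnit R) :
      IsUnit (R ⊗ₖ (1 : Matrix (Fin n) (Fin n) ℂ)) := by
    rw [isUnit_iff_isUnit_det] at hR ⊢
    simpa only [det_kronecker, det_one, one_pow, mul_one] using hR.pow _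
  have kronecker_gram (R : Matrix (Fin N) (Fin N) ℂ) :
      (star R * R) ⊗ₖ (1 : Matrix (Fin n) (Fin n) ℂ) = (R ⊗ₖ 1)ᴴ * (R ⊗ₖ 1) := by
    rw [conjTranspose_kronecker, conjTranspose_one, ← mul_kronecker_mul, one_mul,
      star_eq_conjTranspose]
  rw [kronecker_gram, kronecker_gram] at h
  obtain ⟨y, hy, rfl⟩ := exists_eq_mul_mul_of_posSemidef_fromBlocks (isUnit_kronecker_one hS)
    (isUnit_kronecker_one hT) h
  rw [conjTranspose_kronecker, conjTranspose_one]
  calc pisierNorm p ((Sᴴ ⊗ₖ (1 : Matrix (Fin n) (Fin n) ℂ)) * y * (T ⊗ₖ 1))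
      ≤ schattenNorm (2 * p) Sᴴ * ‖y‖ * schattenNorm (2 * p) T := pisierNorm_le p Sᴴ T y
    _ ≤ schattenNorm (2 * p) S * schattenNorm (2 * p) T := by
        rw [schattenNorm_conjTranspose, mul_right_comm]
        exact mul_le_of_le_one_right
          (mul_nonneg (schattenNorm_nonneg _ _) (schattenNorm_nonneg _ _)) hy
    _ = √(schattenNorm p (star S * S) * schattenNorm p (star T * T)) := by
        rw [star_eq_conjTranspose, star_eq_conjTranspose, schattenNorm_conjTranspose_mul_self,
          schattenNorm_conjTranspose_mul_self, ← mul_pow, Real.sqrt_sq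
            (mul_nonneg (schattenNorm_nonneg _ _) (schattenNorm_nonneg _ _))]

lemma pisierNorm_le_sqrt_of_posSemidef (hp : 1 ≤ p) {A B : Matrix (Fin N) (Fin N) ℂ}
    {x : Matrix (Fin N × Fin n) (Fin N × Fin n) ℂ} (hA : A.PosSemidef) (hB : B.PosSemidef)
    (h : (fromBlocks (A ⊗ₖ (1 : Matrix (Fin n) (Fin n) ℂ)) x xᴴ (B ⊗ₖ 1)).PosSemidef) :
    pisierNorm p x ≤ √(schattenNorm p A * schattenNorm p B) := by
  set c := schattenNorm p (1 : Matrix (Fin N) (Fin N) ℂ)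
  have bound_tendsto : Tendsto
      (fun ε : ℝ => √((schattenNorm p A + ε * c) * (schattenNorm p B + ε * c))) (𝓝[>] 0)
      (𝓝 √(schattenNorm p A * schattenNorm p B)) := by
    refine (Continuous.tendsto' (by fun_prop) 0 _ ?_).mono_left nhdsWithin_le_nhds
    simp only [zero_mul, add_zero]
  refine ge_of_tendsto bound_tendsto (eventually_mem_nhdsWithin.mono fun ε (hε : 0 < ε) => ?_)
  have perturbed_block : (fromBlocks
      ((A + ε • (1 : Matrix (Fin N) (Fin N) ℂ)) ⊗ₖ (1 : Matrix (Fin n) (Fin n) ℂ)) x xᴴ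
      ((B + ε • (1 : Matrix (Fin N) (Fin N) ℂ)) ⊗ₖ 1)).PosSemidef := by
    have := h.add ((PosSemidef.one (n := (Fin N × Fin n) ⊕ (Fin N × Fin n))).smul hε.le)
    simpa only [← fromBlocks_one, fromBlocks_smul, smul_zero, fromBlocks_add, add_zero,
      add_kronecker, smul_kronecker, one_kronecker_one] using this
  refine (pisierNorm_le_sqrt_of_posDef ((PosDef.one.smul hε).posSemidef_add hA)
    ((PosDef.one.smul hε).posSemidef_add hB) perturbed_block).trans (Real.sqrt_le_sqrt ?_)
  exact mul_le_mul (schattenNorm_add_smul_one_le hp hA hε.le)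
    (schattenNorm_add_smul_one_le hp hB hε.le) (schattenNorm_nonneg _ _)
    (add_nonneg (schattenNorm_nonneg _ _) (mul_nonneg hε.le (schattenNorm_nonneg _ _)))

lemma posSemidef_fromBlocks_of_factorization (a b : Matrix (Fin N) (Fin N) ℂ)
    (y : Matrix (Fin N × Fin n) (Fin N × Fin n) ℂ) :
    (fromBlocks ((‖y‖ • (a * aᴴ)) ⊗ₖ (1 : Matrix (Fin n) (Fin n) ℂ))
      ((a ⊗ₖ 1) * y * (b ⊗ₖ 1)) ((a ⊗ₖ 1) * y * (b ⊗ₖ 1))ᴴ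
      ((‖y‖ • (bᴴ * b)) ⊗ₖ 1)).PosSemidef := by
  simpa only [conjTranspose_kronecker, conjTranspose_one, conjTranspose_conjTranspose,
    mul_smul_comm, smul_mul_assoc, mul_one, ← mul_kronecker_mul, ← smul_kronecker] using
    posSemidef_fromBlocks_conj (posSemidef_fromBlocks_norm_smul_one y)
      (aᴴ ⊗ₖ (1 : Matrix (Fin n) (Fin n) ℂ)) (b ⊗ₖ (1 : Matrix (Fin n) (Fin n) ℂ))

end PisierNorm

section CompleteDomination

open scoped Matrix.Norms.L2Operator

variable {N m n : ℕ}

lemma amp_kronecker_one {v : Matrix (Fin N) (Fin N) ℂ → Matrix (Fin m) (Fin m) ℂ} (hv : v 0 = 0)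
    (A : Matrix (Fin N) (Fin N) ℂ) :
    amp v (A ⊗ₖ (1 : Matrix (Fin n) (Fin n) ℂ)) = v A ⊗ₖ 1 := by
  ext ⟨i, k⟩ ⟨j, l⟩
  have block_eq : Matrix.of (fun i j => (A ⊗ₖ (1 : Matrix (Fin n) (Fin n) ℂ)) (i, k) (j, l)) =
      if k = l then A else 0 := by
    ext i j
    split_ifs with hkl <;> simp [kroneckerMap_apply, hkl]
  rw [amp, of_apply, block_eq, kroneckerMap_apply, one_apply]
  split_ifs
  · rw [mul_one]
  · rw [mul_zero, hv, Matrix.zero_apply]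

lemma CompletelyPositive.posSemidef_of_finite
    {u : Matrix (Fin N) (Fin N) ℂ → Matrix (Fin m) (Fin m) ℂ} (hu : CompletelyPositive u)
    {κ : Type*} [Finite κ] {M : Matrix (κ × Fin N) (κ × Fin N) ℂ} (hM : M.PosSemidef) :
    (Matrix.of fun ki lj : κ × Fin m =>
      u (Matrix.of fun i j => M (ki.1, i) (lj.1, j)) ki.2 lj.2).PosSemidef := by
  let e := Finite.equivFin κ
  convert (hu _ _ (hM.submatrix (Prod.map e.symm id))).submatrix (Prod.map e id) using 1
  ext
  simp [ampLeft]

/-- `CPDominates v w` says that the map `[[v, w], [w*, v]]` on `2 × 2` block matrices is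
completely positive, where `w* x = (w xᴴ)ᴴ`; such a `v` controls the regular norm of `w`. -/
def CPDominates (v w : Matrix (Fin N) (Fin N) ℂ → Matrix (Fin m) (Fin m) ℂ) : Prop :=
  ∀ (n : ℕ) (P X Q : Matrix (Fin N × Fin n) (Fin N × Fin n) ℂ),
    (fromBlocks P X Xᴴ Q).PosSemidef →
      (fromBlocks (amp v P) (amp w X) (amp w X)ᴴ (amp v Q)).PosSemidef

lemma CompletelyPositive.cpDominates_self
    {u : Matrix (Fin N) (Fin N) ℂ → Matrix (Fin m) (Fin m) ℂ} (hu : CompletelyPositive u) :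
    CPDominates u u := by
  intro n P X Q h
  have amp_block : (fromBlocks (amp u P) (amp u X) (amp u Xᴴ) (amp u Q)).PosSemidef := by
    convert (hu.posSemidef_of_finite (h.submatrix fun q : (Fin n ⊕ Fin n) × Fin N =>
      Sum.map (fun k => (q.2, k)) (fun k => (q.2, k)) q.1)).submatrix
        fun q : (Fin m × Fin n) ⊕ (Fin m × Fin n) =>
          (Sum.map Prod.snd Prod.snd q, Sum.elim Prod.fst Prod.fst q) using 1
    ext (q | q) (r | r) <;> rfl
  rwa [(isHermitian_fromBlocks_iff.mp amp_block.1).2.1]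

namespace CPDominates

variable {v w : Matrix (Fin N) (Fin N) ℂ → Matrix (Fin m) (Fin m) ℂ}

lemma zero : CPDominates (0 : Matrix (Fin N) (Fin N) ℂ → Matrix (Fin m) (Fin m) ℂ) 0 := by
  intro n P X Q _
  have amp_zero (x : Matrix (Fin N × Fin n) (Fin N × Fin n) ℂ) :
      amp (0 : Matrix (Fin N) (Fin N) ℂ → Matrix (Fin m) (Fin m) ℂ) x = 0 := rfl
  rw [amp_zero, amp_zero, amp_zero, conjTranspose_zero, fromBlocks_zero]
  exact PosSemidef.zero

lemma add {v' w' : Matrix (Fin N) (Fin N) ℂ → Matrix (Fin m) (Fin m) ℂ} (h : CPDominates v w)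
    (h' : CPDominates v' w') : CPDominates (v + v') (w + w') := by
  intro n P X Q hPXQ
  convert (h n P X Q hPXQ).add (h' n P X Q hPXQ)
  rw [fromBlocks_add, ← conjTranspose_add]
  rfl

lemma smul (h : CPDominates v w) (c : ℂ) : CPDominates (‖c‖ • v) (c • w) :=
  fun n P X Q hPXQ => posSemidef_fromBlocks_smul (h n P X Q hPXQ) c

lemma sum {ι : Type*} {s : Finset ι}
    {v w : ι → Matrix (Fin N) (Fin N) ℂ → Matrix (Fin m) (Fin m) ℂ}
    (h : ∀ i ∈ s, CPDominates (v i) (w i)) : CPDominates (∑ i ∈ s, v i) (∑ i ∈ s, w i) := by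
  induction s using Finset.cons_induction with
  | empty => exact zero
  | cons i s hi ih =>
    rw [Finset.sum_cons, Finset.sum_cons]
    exact (h i (Finset.mem_cons_self i s)).add (ih fun j hj => h j (Finset.mem_cons_of_mem hj))

lemma map_posSemidef (h : CPDominates v w) {A : Matrix (Fin N) (Fin N) ℂ} (hA : A.PosSemidef) :
    (v A).PosSemidef := by
  have doubled : (fromBlocks (A.submatrix Prod.fst Prod.fst) (A.submatrix Prod.fst Prod.fst)
      (A.submatrix Prod.fst Prod.fst)ᴴ (A.submatrix Prod.fst Prod.fst) :
        Matrix ((Fin N × Fin 1) ⊕ (Fin N × Fin 1)) _ ℂ).PosSemidef := by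
    rw [conjTranspose_submatrix, hA.1.eq]
    convert hA.submatrix (Sum.elim Prod.fst Prod.fst)
    ext (i | i) (j | j) <;> rfl
  exact (h 1 _ _ _ doubled).submatrix fun i => Sum.inl (i, 0)

variable {p : ℝ≥0∞} {C : ℝ}

lemma pisierNorm_amp_le (h : CPDominates v w) (hp : 1 ≤ p) (hC : 0 ≤ C) (hv : v 0 = 0)
    (hb : ∀ A : Matrix (Fin N) (Fin N) ℂ, A.PosSemidef →
      schattenNorm p (v A) ≤ C * schattenNorm p A)
    (x : Matrix (Fin N × Fin n) (Fin N × Fin n) ℂ) :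
    pisierNorm p (amp w x) ≤ C * pisierNorm p x := by
  rw [pisierNorm.eq_def p x, ← smul_eq_mul C, ← Real.sInf_smul_of_nonneg hC]
  refine le_csInf (Set.Nonempty.smul_set ⟨_, 1, 1, x, by simp, rfl⟩) ?_
  rintro _ ⟨_, ⟨a, b, y, rfl, rfl⟩, rfl⟩
  have corner_bound {A : Matrix (Fin N) (Fin N) ℂ} (hA : A.PosSemidef) :
      schattenNorm p (v (‖y‖ • A)) ≤ C * ‖y‖ * schattenNorm p A := by
    refine (hb _ (hA.smul (norm_nonneg y))).trans_eq ?_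
    rw [schattenNorm_smul_of_nonneg (zero_lt_one.trans_le hp).ne' (norm_nonneg y), mul_assoc]
  have haa := posSemidef_self_mul_conjTranspose a
  have hbb := posSemidef_conjTranspose_mul_self b
  have amp_block := h n _ _ _ (posSemidef_fromBlocks_of_factorization a b y)
  rw [amp_kronecker_one hv, amp_kronecker_one hv] at amp_block
  calc pisierNorm p (amp w ((a ⊗ₖ (1 : Matrix (Fin n) (Fin n) ℂ)) * y * (b ⊗ₖ 1)))
      ≤ √(schattenNorm p (v (‖y‖ • (a * aᴴ))) * schattenNorm p (v (‖y‖ • (bᴴ * b)))) :=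
        pisierNorm_le_sqrt_of_posSemidef hp (h.map_posSemidef (haa.smul (norm_nonneg y)))
          (h.map_posSemidef (hbb.smul (norm_nonneg y))) amp_block
    _ ≤ √((C * ‖y‖ * schattenNorm p (a * aᴴ)) * (C * ‖y‖ * schattenNorm p (bᴴ * b))) :=
        Real.sqrt_le_sqrt <| mul_le_mul (corner_bound haa) (corner_bound hbb)
          (schattenNorm_nonneg _ _) <|
          mul_nonneg (mul_nonneg hC (norm_nonneg y)) (schattenNorm_nonneg _ _)
    _ = √((C * (schattenNorm (2 * p) a * ‖y‖ * schattenNorm (2 * p) b)) ^ 2) := by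
        rw [schattenNorm_mul_conjTranspose_self, schattenNorm_conjTranspose_mul_self]
        ring_nf
    _ = C * (schattenNorm (2 * p) a * ‖y‖ * schattenNorm (2 * p) b) :=
        Real.sqrt_sq <| mul_nonneg hC <| mul_nonneg
          (mul_nonneg (schattenNorm_nonneg _ _) (norm_nonneg y)) (schattenNorm_nonneg _ _)

lemma regNorm_le (h : CPDominates v w) (hp : 1 ≤ p) (hv : v 0 = 0)
    (hb : ∀ A : Matrix (Fin N) (Fin N) ℂ, A.PosSemidef →
      schattenNorm p (v A) ≤ C * schattenNorm p A) :
    regNorm p w ≤ ENNReal.ofReal C := by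
  rw [← ENNReal.ofReal_toReal (ENNReal.ofReal_ne_top (r := C)), ENNReal.toReal_ofReal']
  refine iSup_le fun n => iSup₂_le fun x hx => ENNReal.ofReal_le_ofReal ?_
  calc pisierNorm p (amp w x)
      ≤ max C 0 * pisierNorm p x := h.pisierNorm_amp_le hp (le_max_right C 0) hv
        (fun A hA => (hb A hA).trans
          (mul_le_mul_of_nonneg_right (le_max_left C 0) (schattenNorm_nonneg p A))) x
    _ ≤ max C 0 := mul_le_of_le_one_right (le_max_right C 0) hx

end CPDominates

end CompleteDomination

theorem regNorm_le_of_cp_combination_general {N m : ℕ} {ι : Type*} {p : ℝ≥0∞} (hp : 1 ≤ p)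
    (s : Finset ι) (c : ι → ℂ) (C : ι → ℝ)
    (u : ι → Matrix (Fin N) (Fin N) ℂ →ₗ[ℂ] Matrix (Fin m) (Fin m) ℂ)
    (hu : ∀ i ∈ s, CompletelyPositive (u i))
    (hb : ∀ i ∈ s, ∀ A : Matrix (Fin N) (Fin N) ℂ, A.PosSemidef →
      schattenNorm p (u i A) ≤ C i * schattenNorm p A) :
    regNorm p ⇑(∑ i ∈ s, c i • u i) ≤ ENNReal.ofReal (∑ i ∈ s, ‖c i‖ * C i) := by
  have dominated : CPDominates (∑ i ∈ s, ‖c i‖ • ⇑(u i)) (∑ i ∈ s, c i • ⇑(u i)) :=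
    CPDominates.sum fun i hi => (hu i hi).cpDominates_self.smul (c i)
  have sum_apply (A : Matrix (Fin N) (Fin N) ℂ) :
      (∑ i ∈ s, ‖c i‖ • ⇑(u i)) A = ∑ i ∈ s, ‖c i‖ • u i A := by
    simp only [Finset.sum_apply, Pi.smul_apply]
  rw [LinearMap.coe_sum]
  refine dominated.regNorm_le hp ?_ fun A hA => ?_
  · simp only [sum_apply, map_zero, smul_zero, Finset.sum_const_zero]
  calc schattenNorm p ((∑ i ∈ s, ‖c i‖ • ⇑(u i)) A)
      = schattenNorm p (∑ i ∈ s, ‖c i‖ • u i A) := by rw [sum_apply]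
    _ ≤ ∑ i ∈ s, ‖c i‖ * schattenNorm p (u i A) :=
        schattenNorm_sum_smul_le hp s (fun i _ => norm_nonneg (c i)) fun i hi =>
          (hu i hi).cpDominates_self.map_posSemidef hA
    _ ≤ ∑ i ∈ s, ‖c i‖ * (C i * schattenNorm p A) :=
        Finset.sum_le_sum fun i hi => mul_le_mul_of_nonneg_left (hb i hi A hA) (norm_nonneg _)
    _ = (∑ i ∈ s, ‖c i‖ * C i) * schattenNorm p A := by simp only [Finset.sum_mul, mul_assoc]

/-- Implication (iii) ⟹ (i) of Theorem 0.1 (matrix-algebra case, with quantitative bound):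
a linear combination `u₁ - u₂ + i(u₃ - u₄)` of bounded completely positive maps is regular,
with `‖u‖_r ≤ C₁ + C₂ + C₃ + C₄`. -/
theorem regNorm_le_of_cp_combination {N : ℕ} (p : ℝ≥0∞) (hp : 1 ≤ p) (hptop : p ≠ ∞)
    (C₁ C₂ C₃ C₄ : ℝ)
    (u₁ u₂ u₃ u₄ : Matrix (Fin N) (Fin N) ℂ →ₗ[ℂ] Matrix (Fin N) (Fin N) ℂ)
    (h₁ : CompletelyPositive (⇑u₁)) (h₂ : CompletelyPositive (⇑u₂))
    (h₃ : CompletelyPositive (⇑u₃)) (h₄ : CompletelyPositive (⇑u₄))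
    (hb₁ : ∀ x : Matrix (Fin N) (Fin N) ℂ, schattenNorm p (u₁ x) ≤ C₁ * schattenNorm p x)
    (hb₂ : ∀ x : Matrix (Fin N) (Fin N) ℂ, schattenNorm p (u₂ x) ≤ C₂ * schattenNorm p x)
    (hb₃ : ∀ x : Matrix (Fin N) (Fin N) ℂ, schattenNorm p (u₃ x) ≤ C₃ * schattenNorm p x)
    (hb₄ : ∀ x : Matrix (Fin N) (Fin N) ℂ, schattenNorm p (u₄ x) ≤ C₄ * schattenNorm p x) :
    regNorm p (fun x => u₁ x - u₂ x + Complex.I • (u₃ x - u₄ x)) ≤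
      ENNReal.ofReal (C₁ + C₂ + C₃ + C₄) := by
  have bound := regNorm_le_of_cp_combination_general hp Finset.univ
    ![1, -1, Complex.I, -Complex.I] ![C₁, C₂, C₃, C₄] ![u₁, u₂, u₃, u₄]
    (by simp [Fin.forall_fin_succ, h₁, h₂, h₃, h₄])
    (by simp [Fin.forall_fin_succ, hb₁, hb₂, hb₃, hb₄])
  convert bound using 2
  · ext x
    simp [Fin.sum_univ_four, sub_eq_add_neg, add_assoc]
  · simp [Fin.sum_univ_four]
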